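/- Correctness of the exact bribery reduction (cautious version): in the bribery construction with m < n, the following are equivalent: (i) there exists α : X → Bool such that ψ[α∪β] is true for every β : Y → Bool; (ii) there exists a profile J⃗' obtained from J⃗ = (J₁, J₂, J₃) by replacing at most one of its ballots by a rational ballot, such that every r* ∈ Kemeny(J⃗') sets the issue b_1 to true. -/

import Mathlib

/-!
Write the distance of a ballot `r` to a profile as a sum over issues of `cost p i (r i)`, the number
of ballots of the profile disagreeing with `r` on issue `i`, and split this sum by kinds of issues
(`dist3_split`).

*From a winning `α` to a bribe.* Replace `J₁` by the ballot `bribe α` which sets `x = α`, `x' = ¬α`,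
all `t` and all `b` to true. A rational ballot with `b₁` false either makes a whole block
`u_{i,·}` true, or satisfies `Z ∧ T ∧ a`, or satisfies `A ∧ B ∧ a ∧ ¬ψ`. The first is too expensive
because `u` is large, the second because `m < n`, and the third because its `x`-part
must differ from `α`, which costs 2 more, while `C ∧ T` is only 1 more expensive than `B ∧ a`.
So each is strictly further from the bribed profile than `bribe α` itself.

*From a bribe to a winning `α`.* After replacing at most one ballot, every issue outside the `u`-block
is still accepted by at most one voter, so making it true costs 1 or 3 more than making it false
(`IsMinority`). Suppose every `α` has some `β` falsifying `ψ`, and let `r` be a Kemeny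
outcome with `b₁` true. If `r` makes a whole block `u_{i,·}` true, making `b₁` false gives a strictly
better rational ballot (`exists_better_of_block`). Otherwise `r` satisfies `A ∧ T ∧ C`, and passing to
`A ∧ B ∧ a` with `y = β` saves at least `3m + 4` and costs at most `3m + 3`
(`exists_better_of_gamma0`). Both contradict minimality.
-/

/-!
Constraint-based judgment aggregation: the bribery construction.
Issues are modelled as an inductive type, ballots as functions `Issue n m → Bool`,
the integrity constraint as a predicate on ballots, and the formula ψ as a Boolean
function of the assignments to X and Y.
-/

namespace Brib

/-- The issues of the bribery construction. -/
inductive Issue (n m : ℕ) : Type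
  | x : Fin n → Issue n m
  | x' : Fin n → Issue n m
  | z : Fin n → Issue n m
  | y : Fin m → Issue n m
  | y' : Fin m → Issue n m
  | t : Fin m → Issue n m
  | u : Fin 3 → Fin (10 * n + 10 * m + 10) → Issue n m
  | a : Issue n m
  | b : Fin (2 * m + 4) → Issue n m
  deriving DecidableEq, Fintype

variable {n m : ℕ}

/-- Hamming distance between two ballots: the number of issues on which they differ. -/
def hamming {I : Type*} [Fintype I] (r r' : I → Bool) : ℕ :=
  (Finset.univ.filter (fun i => r i ≠ r' i)).card

/-- Weighted Hamming distance: the sum of the weights of the issues on which the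
two ballots differ. -/
def whamming {I : Type*} [Fintype I] (w : I → ℕ) (r r' : I → Bool) : ℕ :=
  ∑ i ∈ Finset.univ.filter (fun i => r i ≠ r' i), w i

def bigA (r : Issue n m → Bool) : Prop := ∀ i, r (.x i) ≠ r (.x' i)
def bigZ (r : Issue n m → Bool) : Prop := ∀ i, r (.z i) = true
def bigB (r : Issue n m → Bool) : Prop := ∀ j, r (.y j) ≠ r (.y' j)
def bigT (r : Issue n m → Bool) : Prop := ∀ j, r (.t j) = true
def bigC (r : Issue n m → Bool) : Prop := ∀ j, r (.b j) = true

/-- The part Γ₀ of the integrity constraint. -/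
def gamma0 (psi : (Fin n → Bool) → (Fin m → Bool) → Bool) (r : Issue n m → Bool) : Prop :=
  (r .a = true ∨ bigC r) ∧ (r .a = true → ∀ j, r (.b j) = false) ∧
  (bigC r → r .a = false) ∧
  (bigA r ∨ bigZ r) ∧ (bigA r → ∀ i, r (.z i) = false) ∧
  Xor' (bigB r) (bigT r) ∧ (bigB r → ∀ j, r (.t j) = false) ∧
  (bigZ r → ∀ i, r (.x i) = false ∧ r (.x' i) = false) ∧
  (bigT r → ∀ j, r (.y j) = false ∧ r (.y' j) = false) ∧
  (bigZ r → (r .a = true ∧ bigT r)) ∧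
  ((bigA r ∧ bigB r) →
    (psi (fun i => r (.x i)) (fun j => r (.y j)) = false ∧ r .a = true)) ∧
  ((bigA r ∧ bigT r) → bigC r)

/-- A ballot is rational if it satisfies the integrity constraint
`Γ = Γ₀ ∨ ⋁_{i∈[3]} ⋀_{ℓ∈[u]} u_{i,ℓ}`. -/
def rational (psi : (Fin n → Bool) → (Fin m → Bool) → Bool) (r : Issue n m → Bool) : Prop :=
  gamma0 psi r ∨ ∃ i : Fin 3, ∀ ℓ, r (.u i ℓ) = true

/-- The profile J⃗ = (J₁, J₂, J₃): the ballot J_{k+1} sets exactly the issues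
u_{k+1,ℓ} to true. -/
def Jp (k : Fin 3) : Issue n m → Bool := fun i => match i with
  | .u k' _ => k' == k
  | _ => false

/-- The briber's desired ballot J₀: true exactly on the b- and u₁-issues. -/
def Jzero : Issue n m → Bool := fun i => match i with
  | .b _ => true
  | .u k _ => k == 0
  | _ => false

/-- The briber's weight function: weight 1 on each b-issue, weight 0 elsewhere. -/
def wt : Issue n m → ℕ := fun i => match i with
  | .b _ => 1
  | _ => 0

/-- Cumulative Hamming distance of a ballot to a profile of three ballots. -/
def dist3 (r p1 p2 p3 : Issue n m → Bool) : ℕ :=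
  hamming r p1 + hamming r p2 + hamming r p3

/-- Membership in the set of Kemeny outcomes of the profile (p1, p2, p3):
a rational ballot minimizing the cumulative Hamming distance among rational ballots. -/
def kemenyMem (psi : (Fin n → Bool) → (Fin m → Bool) → Bool)
    (p1 p2 p3 r : Issue n m → Bool) : Prop :=
  rational psi r ∧ ∀ r', rational psi r' → dist3 r p1 p2 p3 ≤ dist3 r' p1 p2 p3

end Brib

namespace Brib

variable {n m : ℕ}

/-- The issues as an iterated disjoint sum of their kinds. -/
def issueEquiv (n m : ℕ) : Issue n m ≃
    (Fin n ⊕ Fin n ⊕ Fin n) ⊕ (Fin m ⊕ Fin m ⊕ Fin m) ⊕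
      (Fin 3 × Fin (10 * n + 10 * m + 10)) ⊕ Unit ⊕ Fin (2 * m + 4) where
  toFun
    | .x i => .inl (.inl i)
    | .x' i => .inl (.inr (.inl i))
    | .z i => .inl (.inr (.inr i))
    | .y j => .inr (.inl (.inl j))
    | .y' j => .inr (.inl (.inr (.inl j)))
    | .t j => .inr (.inl (.inr (.inr j)))
    | .u k l => .inr (.inr (.inl (k, l)))
    | .a => .inr (.inr (.inr (.inl ())))
    | .b j => .inr (.inr (.inr (.inr j)))
  invFun
    | .inl (.inl i) => .x i
    | .inl (.inr (.inl i)) => .x' i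
    | .inl (.inr (.inr i)) => .z i
    | .inr (.inl (.inl j)) => .y j
    | .inr (.inl (.inr (.inl j))) => .y' j
    | .inr (.inl (.inr (.inr j))) => .t j
    | .inr (.inr (.inl (k, l))) => .u k l
    | .inr (.inr (.inr (.inl ()))) => .a
    | .inr (.inr (.inr (.inr j))) => .b j
  left_inv i := by cases i <;> rfl
  right_inv s := by rcases s with (_ | _ | _) | (_ | _ | _) | _ | _ | _ <;> rfl

lemma sum_issue (f : Issue n m → ℕ) :
    ∑ i, f i = ∑ i, (f (.x i) + f (.x' i)) + ∑ i, f (.z i) + ∑ j, (f (.y j) + f (.y' j))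
      + ∑ j, f (.t j) + ∑ k, ∑ l, f (.u k l) + f .a + ∑ j, f (.b j) := by
  rw [← (issueEquiv n m).symm.sum_comp f]
  simp only [Fintype.sum_sum_type, Fintype.sum_prod_type, Finset.sum_add_distrib,
    Finset.univ_unique, Finset.sum_singleton]
  simp only [issueEquiv, Equiv.coe_fn_symm_mk]
  ring

/-- The number of ballots among `p1, p2, p3` whose value on issue `i` differs from `v`. -/
def cost (p1 p2 p3 : Issue n m → Bool) (i : Issue n m) (v : Bool) : ℕ :=
  (if v ≠ p1 i then 1 else 0) + (if v ≠ p2 i then 1 else 0) + (if v ≠ p3 i then 1 else 0)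

lemma dist3_eq_sum (r p1 p2 p3 : Issue n m → Bool) :
    dist3 r p1 p2 p3 = ∑ i, cost p1 p2 p3 i (r i) := by
  simp only [dist3, hamming, cost, Finset.card_filter, Finset.sum_add_distrib]

lemma dist3_split (r p1 p2 p3 : Issue n m → Bool) :
    dist3 r p1 p2 p3 =
      ∑ i, (cost p1 p2 p3 (.x i) (r (.x i)) + cost p1 p2 p3 (.x' i) (r (.x' i)))
      + ∑ i, cost p1 p2 p3 (.z i) (r (.z i))
      + ∑ j, (cost p1 p2 p3 (.y j) (r (.y j)) + cost p1 p2 p3 (.y' j) (r (.y' j)))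
      + ∑ j, cost p1 p2 p3 (.t j) (r (.t j))
      + ∑ k, ∑ l, cost p1 p2 p3 (.u k l) (r (.u k l))
      + cost p1 p2 p3 .a (r .a) + ∑ j, cost p1 p2 p3 (.b j) (r (.b j)) := by
  rw [dist3_eq_sum, sum_issue]

lemma sum_fin_ge {N : ℕ} (f : Fin N → ℕ) (c : ℕ) (h : ∀ i, c ≤ f i) : N * c ≤ ∑ i, f i := by
  simpa using Finset.card_nsmul_le_sum Finset.univ f c (fun i _ => h i)

lemma sum_fin_eq {N : ℕ} (f : Fin N → ℕ) (c : ℕ) (h : ∀ i, f i = c) : ∑ i, f i = N * c := by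
  simp [h]

lemma sum_fin_add_le {N : ℕ} (f g : Fin N → ℕ) (c : ℕ) (h : ∀ i, f i + c ≤ g i) :
    ∑ i, f i + N * c ≤ ∑ i, g i := by
  simpa [Finset.sum_add_distrib] using Finset.sum_le_sum (fun i (_ : i ∈ Finset.univ) => h i)

/-! ### The bribing ballot -/

/-- The ballot satisfying `A ∧ T ∧ C` with `x`-part `α`. -/
def bribe (α : Fin n → Bool) : Issue n m → Bool
  | .x i => α i
  | .x' i => !α i
  | .t _ => true
  | .b _ => true
  | _ => false

lemma bribe_rational (hn : 0 < n) (hm : 0 < m)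
    (psi : (Fin n → Bool) → (Fin m → Bool) → Bool) (α : Fin n → Bool) :
    rational psi (bribe α) := by
  have hZ : ¬ bigZ (bribe α : Issue n m → Bool) := fun h => by simpa [bribe] using h ⟨0, hn⟩
  have hB : ¬ bigB (bribe α : Issue n m → Bool) := fun h => by simpa [bribe] using h ⟨0, hm⟩
  have hA : bigA (bribe α : Issue n m → Bool) := fun i => by simp [bribe]
  have hT : bigT (bribe α : Issue n m → Bool) := fun i => by simp [bribe]
  have hC : bigC (bribe α : Issue n m → Bool) := fun i => by simp [bribe]
  left
  simp [gamma0, hZ, hB, hA, hT, hC, Xor']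
  simp [bribe]

lemma Jp_rational (psi : (Fin n → Bool) → (Fin m → Bool) → Bool) (k : Fin 3) :
    rational psi (Jp k) :=
  Or.inr ⟨k, fun l => by simp [Jp]⟩

lemma dist3_bribe (α : Fin n → Bool) :
    dist3 (bribe α : Issue n m → Bool) (bribe α) (Jp 1) (Jp 2) =
      2 * n + 2 * m + 2 * (2 * m + 4) + 2 * (10 * n + 10 * m + 10) := by
  rw [dist3_split, Fin.sum_univ_three, sum_fin_eq _ 2, sum_fin_eq _ 0, sum_fin_eq _ 0,
    sum_fin_eq _ 2, sum_fin_eq _ 0, sum_fin_eq _ 1, sum_fin_eq _ 1, sum_fin_eq _ 2]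
  · simp [cost, bribe, Jp]; ring
  all_goals intro i; simp [cost, bribe, Jp]
  cases α i <;> simp

/-- Any rational ballot rejecting `b₁` is strictly further from the bribed profile than
`bribe α`, provided `α` makes `ψ` true whatever `β` is. -/
lemma dist3_bribe_lt (hmn : m < n) (psi : (Fin n → Bool) → (Fin m → Bool) → Bool)
    (α : Fin n → Bool) (hα : ∀ β, psi α β = true) (r : Issue n m → Bool)
    (hr : rational psi r) (j₀ : Fin (2 * m + 4)) (hb : r (.b j₀) = false) :
    dist3 (bribe α : Issue n m → Bool) (bribe α) (Jp 1) (Jp 2) <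
      dist3 r (bribe α) (Jp 1) (Jp 2) := by
  rw [dist3_bribe, dist3_split]
  set c := cost (bribe α : Issue n m → Bool) (Jp 1) (Jp 2) with hc
  have hx : n * 1 ≤ ∑ i, (c (.x i) (r (.x i)) + c (.x' i) (r (.x' i))) := by
    apply sum_fin_ge; intro i
    cases h : α i <;> cases r (.x i) <;> cases r (.x' i) <;> simp [hc, cost, bribe, Jp, h]
  have ht : m * 1 ≤ ∑ j, c (.t j) (r (.t j)) := by
    apply sum_fin_ge; intro j
    cases r (.t j) <;> simp [hc, cost, bribe, Jp]
  have hbs : (2 * m + 4) * 1 ≤ ∑ j, c (.b j) (r (.b j)) := by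
    apply sum_fin_ge; intro j
    cases r (.b j) <;> simp [hc, cost, bribe, Jp]
  have hu0 : 0 ≤ ∑ l, c (.u 0 l) (r (.u 0 l)) := Nat.zero_le _
  have hu1 : (10 * n + 10 * m + 10) * 1 ≤ ∑ l, c (.u 1 l) (r (.u 1 l)) := by
    apply sum_fin_ge; intro j
    cases r (.u 1 j) <;> simp [hc, cost, bribe, Jp]
  have hu2 : (10 * n + 10 * m + 10) * 1 ≤ ∑ l, c (.u 2 l) (r (.u 2 l)) := by
    apply sum_fin_ge; intro j
    cases r (.u 2 j) <;> simp [hc, cost, bribe, Jp]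
  rw [Fin.sum_univ_three]
  rcases hr with hr | ⟨k, hk⟩
  · obtain ⟨h1, -, -, h4, -, h6, -, -, -, h10, h11, h12⟩ := hr
    have hC : ¬ bigC r := fun h => by simp [h j₀] at hb
    have ha : r .a = true := h1.resolve_right hC
    have hca : c .a (r .a) = 3 := by simp [hc, cost, bribe, Jp, ha]
    by_cases hA : bigA r
    · have hT : ¬ bigT r := fun h => hC (h12 ⟨hA, h⟩)
      have hB : bigB r := by
        rcases h6 with h | h
        · exact h.1
        · exact absurd h.1 hT
      have hy : m * 3 ≤ ∑ j, (c (.y j) (r (.y j)) + c (.y' j) (r (.y' j))) := by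
        apply sum_fin_ge; intro j
        have := hB j
        revert this
        cases r (.y j) <;> cases r (.y' j) <;> simp [hc, cost, bribe, Jp]
      have hne : ∃ i, r (.x i) ≠ α i := by
        by_contra! h
        have h' := (h11 ⟨hA, hB⟩).1
        rw [funext h, hα] at h'
        simp at h'
      obtain ⟨i₀, hi₀⟩ := hne
      -- At `i₀` both `x` and `x'` deviate from `α`, costing 4 instead of 2.
      have hx' : 2 * n + 2 ≤ ∑ i, (c (.x i) (r (.x i)) + c (.x' i) (r (.x' i))) := by
        have h2 : ∀ i, 2 + (if i = i₀ then 2 else 0) ≤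
            c (.x i) (r (.x i)) + c (.x' i) (r (.x' i)) := by
          intro i
          have h3 := hA i
          by_cases hi : i = i₀
          · subst hi
            revert h3 hi₀
            cases h : α i <;> cases r (.x i) <;> cases r (.x' i) <;>
              simp [hc, cost, bribe, Jp, h]
          · revert h3
            cases h : α i <;> cases r (.x i) <;> cases r (.x' i) <;>
              simp [hc, cost, bribe, Jp, h, hi]
        have := Finset.sum_le_sum (fun i (_ : i ∈ Finset.univ) => h2 i)
        simp [Finset.sum_add_distrib] at this
        simp [Finset.sum_add_distrib]
        omega
      omega
    · have hZ : bigZ r := h4.resolve_left hA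
      have hT : bigT r := (h10 hZ).2
      have hz : n * 3 ≤ ∑ i, c (.z i) (r (.z i)) := by
        apply sum_fin_ge; intro i
        simp [hc, cost, bribe, Jp, hZ i]
      have ht' : m * 2 ≤ ∑ j, c (.t j) (r (.t j)) := by
        apply sum_fin_ge; intro j
        simp [hc, cost, bribe, Jp, hT j]
      omega
  · have hk' : k = 0 ∨ k = 1 ∨ k = 2 := by omega
    rcases hk' with rfl | rfl | rfl
    · have : (10 * n + 10 * m + 10) * 3 ≤ ∑ l, c (.u 0 l) (r (.u 0 l)) := by
        apply sum_fin_ge; intro l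
        simp [hc, cost, bribe, Jp, hk l]
      omega
    · have : (10 * n + 10 * m + 10) * 2 ≤ ∑ l, c (.u 1 l) (r (.u 1 l)) := by
        apply sum_fin_ge; intro l
        simp [hc, cost, bribe, Jp, hk l]
      omega
    · have : (10 * n + 10 * m + 10) * 2 ≤ ∑ l, c (.u 2 l) (r (.u 2 l)) := by
        apply sum_fin_ge; intro l
        simp [hc, cost, bribe, Jp, hk l]
      omega

/-! ### Improving a ballot that accepts `b₁` -/

/-- Accepting issue `i` costs between 1 and 3 more than rejecting it; equivalently, at most one
of the three ballots accepts `i`. -/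
def IsMinority (p1 p2 p3 : Issue n m → Bool) (i : Issue n m) : Prop :=
  cost p1 p2 p3 i false + 1 ≤ cost p1 p2 p3 i true ∧
    cost p1 p2 p3 i true ≤ cost p1 p2 p3 i false + 3

lemma isMinority_of_replace (J' : Fin 3 → Issue n m → Bool)
    (h : (Finset.univ.filter (fun k : Fin 3 => J' k ≠ Jp k)).card ≤ 1)
    (i : Issue n m) (hi : ∀ k, Jp k i = false) : IsMinority (J' 0) (J' 1) (J' 2) i := by
  rw [Finset.card_le_one] at h
  have key : ∀ k l : Fin 3, k ≠ l → J' k i = false ∨ J' l i = false := by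
    intro k l hkl
    by_contra! hcon
    refine hkl (h k ?_ l ?_) <;> simp only [Finset.mem_filter_univ] <;> intro he
    · exact hcon.1 (by rw [he, hi])
    · exact hcon.2 (by rw [he, hi])
  have h01 := key 0 1 (by decide)
  have h02 := key 0 2 (by decide)
  have h12 := key 1 2 (by decide)
  revert h01 h02 h12
  unfold IsMinority cost
  cases J' 0 i <;> cases J' 1 i <;> cases J' 2 i <;> simp

lemma exists_better_of_block (psi : (Fin n → Bool) → (Fin m → Bool) → Bool)
    (p1 p2 p3 r : Issue n m → Bool) (j₀ : Fin (2 * m + 4))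
    (hmin : IsMinority p1 p2 p3 (.b j₀))
    (hk : ∃ k : Fin 3, ∀ l, r (.u k l) = true) (hb : r (.b j₀) = true) :
    ∃ r', rational psi r' ∧ dist3 r' p1 p2 p3 < dist3 r p1 p2 p3 := by
  obtain ⟨k, hk⟩ := hk
  refine ⟨Function.update r (.b j₀) false, Or.inr ⟨k, fun l => by simp [hk]⟩, ?_⟩
  rw [dist3_eq_sum, dist3_eq_sum]
  have h1 := hmin.1
  refine Finset.sum_lt_sum (fun i _ => ?_) ⟨.b j₀, Finset.mem_univ _, ?_⟩
  · by_cases hi : i = .b j₀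
    · subst hi
      rw [Function.update_self, hb]
      omega
    · rw [Function.update_of_ne hi]
  · rw [Function.update_self, hb]
    omega

/-- The ballot agreeing with `r` on the `x`-, `z`- and `u`-issues, satisfying `B ∧ a`
with `y`-part `β` and rejecting all `t`- and `b`-issues. -/
def switchY (r : Issue n m → Bool) (β : Fin m → Bool) : Issue n m → Bool
  | .y j => β j
  | .y' j => !β j
  | .t _ => false
  | .a => true
  | .b _ => false
  | i => r i

lemma exists_better_of_gamma0 (hm : 0 < m)
    (psi : (Fin n → Bool) → (Fin m → Bool) → Bool)
    (hpsi : ∀ α, ∃ β, psi α β = false) (p1 p2 p3 r : Issue n m → Bool)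
    (hmin : ∀ i : Issue n m, (∀ k, Jp k i = false) → IsMinority p1 p2 p3 i)
    (hr : gamma0 psi r) (j₀ : Fin (2 * m + 4)) (hb : r (.b j₀) = true) :
    ∃ r', rational psi r' ∧ dist3 r' p1 p2 p3 < dist3 r p1 p2 p3 := by
  obtain ⟨h1, h2, h3, h4, h5, h6, -, -, h9, h10, h11, -⟩ := hr
  have ha : r .a = false := by
    by_contra h
    simpa [hb] using h2 (by simpa using h) j₀
  have hC : bigC r := h1.resolve_left (by simp [ha])
  have hZ : ¬ bigZ r := fun h => by simpa [ha] using (h10 h).1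
  have hA : bigA r := h4.resolve_right hZ
  have hB : ¬ bigB r := fun h => by simpa [ha] using (h11 ⟨hA, h⟩).2
  have hT : bigT r := by
    rcases h6 with h | h
    · exact absurd h.1 hB
    · exact h.1
  obtain ⟨β, hβ⟩ := hpsi (fun i => r (.x i))
  refine ⟨switchY r β, Or.inl ?_, ?_⟩
  · have hA' : bigA (switchY r β) := hA
    have hZ' : ¬ bigZ (switchY r β) := hZ
    have hB' : bigB (switchY r β) := fun j => by simp [switchY]
    have hT' : ¬ bigT (switchY r β) := fun h => by simpa [switchY] using h ⟨0, hm⟩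
    have hC' : ¬ bigC (switchY r β) := fun h => by simpa [switchY] using h j₀
    simp [gamma0, hA', hZ', hB', hT', hC', Xor']
    simp [switchY, hβ, h5 hA]
  · rw [dist3_split, dist3_split]
    set c := cost p1 p2 p3 with hc
    have hy : ∑ j, (c (.y j) (switchY r β (.y j)) + c (.y' j) (switchY r β (.y' j)))
        ≤ ∑ j, (c (.y j) (r (.y j)) + c (.y' j) (r (.y' j)) + 3) := by
      refine Finset.sum_le_sum fun j _ => ?_
      rw [(h9 hT j).1, (h9 hT j).2]
      have e1 := hmin (.y j) (fun _ => rfl)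
      have e2 := hmin (.y' j) (fun _ => rfl)
      unfold IsMinority at e1 e2
      rw [← hc] at e1 e2
      cases h : β j <;> simp only [switchY, h, Bool.not_true, Bool.not_false] <;> omega
    have ht : ∑ j, c (.t j) (switchY r β (.t j)) + m * 1 ≤ ∑ j, c (.t j) (r (.t j)) := by
      apply sum_fin_add_le; intro j
      rw [hT j]
      exact (hmin (.t j) (fun _ => rfl)).1
    have hbs : ∑ j, c (.b j) (switchY r β (.b j)) + (2 * m + 4) * 1
        ≤ ∑ j, c (.b j) (r (.b j)) := by
      apply sum_fin_add_le; intro j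
      rw [hC j]
      exact (hmin (.b j) (fun _ => rfl)).1
    have hca : c .a (switchY r β .a) ≤ c .a (r .a) + 3 := by
      rw [ha]
      exact (hmin .a (fun _ => rfl)).2
    have hx : ∀ i, switchY r β (.x i) = r (.x i) := fun _ => rfl
    have hx' : ∀ i, switchY r β (.x' i) = r (.x' i) := fun _ => rfl
    have hz : ∀ i, switchY r β (.z i) = r (.z i) := fun _ => rfl
    have hu : ∀ k l, switchY r β (.u k l) = r (.u k l) := fun _ _ => rfl
    rw [Finset.sum_add_distrib (g := fun _ => 3)] at hy
    simp only [Finset.sum_const, Finset.card_univ, Fintype.card_fin, smul_eq_mul] at hy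
    simp only [hx, hx', hz, hu]
    omega

end Brib

open Brib in
/-- correctness of the cautious exact bribery reduction: with m < n,
there exists α with ψ[α∪β] true for every β
iff
one can replace at most one ballot of J⃗ = (J₁, J₂, J₃) by a rational ballot, obtaining
a profile J⃗', such that every Kemeny outcome of J⃗' sets the issue b₁ to true. -/
theorem brib_exact_reduction_correct_cautious (n m : ℕ) (hn : 0 < n) (hm : 0 < m)
    (hmn : m < n)
    (psi : (Fin n → Bool) → (Fin m → Bool) → Bool) :
    (∃ α : Fin n → Bool, ∀ β : Fin m → Bool, psi α β = true) ↔
    (∃ J' : Fin 3 → Issue n m → Bool,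
      (∀ k, rational psi (J' k)) ∧
      (Finset.univ.filter (fun k : Fin 3 => J' k ≠ Jp k)).card ≤ 1 ∧
      (∀ r : Issue n m → Bool, kemenyMem psi (J' 0) (J' 1) (J' 2) r →
        r (.b ⟨0, by omega⟩) = true)) := by
  constructor
  · rintro ⟨α, hα⟩
    refine ⟨![bribe α, Jp 1, Jp 2], ?_, ?_, ?_⟩
    · intro k
      have hk' : k = 0 ∨ k = 1 ∨ k = 2 := by omega
      rcases hk' with rfl | rfl | rfl
      · exact bribe_rational hn hm psi α
      · exact Jp_rational psi 1
      · exact Jp_rational psi 2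
    · refine (Finset.card_le_card (t := {0}) fun k hk => ?_).trans (by simp)
      have hk' : k = 0 ∨ k = 1 ∨ k = 2 := by omega
      rcases hk' with rfl | rfl | rfl
      · simp
      · simp at hk
      · simp at hk
    · intro r hr
      by_contra hb
      have h1 := dist3_bribe_lt hmn psi α hα r hr.1 _ (by simpa using hb)
      have h2 := hr.2 (bribe α) (bribe_rational hn hm psi α)
      exact absurd h1 (not_lt.mpr h2)
  · rintro ⟨J', -, hcard, hJ⟩
    by_contra! hno
    have hmin := isMinority_of_replace J' hcard
    obtain ⟨r, hr, hrmin⟩ := Set.exists_min_image {r | rational psi r}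
      (fun r => dist3 r (J' 0) (J' 1) (J' 2)) (Set.toFinite _) ⟨Jp 0, Jp_rational psi 0⟩
    have hb := hJ r ⟨hr, hrmin⟩
    obtain ⟨r', hr', hlt⟩ : ∃ r', rational psi r' ∧
        dist3 r' (J' 0) (J' 1) (J' 2) < dist3 r (J' 0) (J' 1) (J' 2) := by
      rcases hr with h | h
      · exact exists_better_of_gamma0 hm psi
          (fun α => (hno α).imp fun β h => by simpa using h) _ _ _ r hmin h _ hb
      · exact exists_better_of_block psi _ _ _ r _ (hmin _ fun _ => rfl) h hb
    exact absurd hlt (not_lt.mpr (hrmin r' hr'))
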